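/- arXiv:1202.3627 — 4 statements merged into one kernel-verified Lean document; each statement's English description precedes it below -/
import Mathlib

section
/- Let T > 0, K > 0, d ≥ 0, and define η(t) = 2K·e^{−Kt}·d/(1 − e^{−2KT}) for t ∈ [0,T]. Let φ : [0,T] → ℝ be differentiable with φ(t) ≥ 0 for all t ∈ [0,T], φ(0) = d, and φ'(t) ≤ K·φ(t) − η(t) for all t ∈ [0,T]. Then φ(T) = 0. -/
open MeasureTheory Set

/-!
With the integrating factor `e^{-K t}`, the differential inequality becomes
`(e^{-K t} φ)' ≤ -e^{-K t} η`, so `e^{-K T} φ T ≤ φ 0 - ∫₀ᵀ e^{-K s} η s ds`. The drift `η` is the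
multiple of `e^{-K t}` for which the integral equals `φ 0`, whence `φ T ≤ 0`.
-/

/-- The drift `η t` that makes two diffusions started at distance `d` meet by time `T`, where `K`
bounds the exponential growth rate of their distance in the absence of drift. Normalising by an
integral rather than by its closed form allows `K = 0`. -/
noncomputable def couplingDrift (K T d t : ℝ) : ℝ :=
  Real.exp (-K * t) * d / ∫ s in 0..T, Real.exp (-2 * K * s)

theorem exp_neg_mul_le_sub_integral_of_deriv_right_le {a b : ℝ} (hab : a ≤ b)
    {A k φ φ' η : ℝ → ℝ} (hA : ContinuousOn A (Icc a b)) (hφ : ContinuousOn φ (Icc a b))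
    (hA' : ∀ t ∈ Ioo a b, HasDerivWithinAt A (k t) (Ioi t) t)
    (hφ' : ∀ t ∈ Ioo a b, HasDerivWithinAt φ (φ' t) (Ioi t) t)
    (hη : IntegrableOn η (Icc a b)) (hle : ∀ t ∈ Ioo a b, φ' t ≤ k t * φ t - η t) :
    Real.exp (-A b) * φ b ≤ Real.exp (-A a) * φ a - ∫ s in a..b, Real.exp (-A s) * η s := by
  have hfactor : ContinuousOn (fun t ↦ Real.exp (-A t)) (Icc a b) := hA.neg.rexp
  have hderiv (t : ℝ) (ht : t ∈ Ioo a b) :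
      HasDerivWithinAt (fun t ↦ Real.exp (-A t) * φ t)
        (Real.exp (-A t) * -k t * φ t + Real.exp (-A t) * φ' t) (Ioi t) t :=
    (hA' t ht).neg.exp.mul (hφ' t ht)
  have hderiv_le (t : ℝ) (ht : t ∈ Ioo a b) :
      Real.exp (-A t) * -k t * φ t + Real.exp (-A t) * φ' t ≤ -(Real.exp (-A t) * η t) := by
    linarith [mul_le_mul_of_nonneg_left (hle t ht) (Real.exp_pos (-A t)).le]
  have hincrement : Real.exp (-A b) * φ b - Real.exp (-A a) * φ a ≤
      ∫ s in a..b, -(Real.exp (-A s) * η s) :=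
    intervalIntegral.sub_le_integral_of_hasDeriv_right_of_le hab (hfactor.mul hφ) hderiv
      (hη.continuousOn_mul hfactor isCompact_Icc).neg hderiv_le
  rw [intervalIntegral.integral_neg] at hincrement
  linarith

theorem integral_exp_const_mul {c : ℝ} (hc : c ≠ 0) (a b : ℝ) :
    ∫ x in a..b, Real.exp (c * x) = (Real.exp (c * b) - Real.exp (c * a)) / c := by
  rw [intervalIntegral.integral_comp_mul_left _ hc, integral_exp, smul_eq_mul, inv_mul_eq_div]

namespace couplingDrift

theorem continuous (K T d : ℝ) : Continuous (couplingDrift K T d) := by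
  unfold couplingDrift
  fun_prop

theorem eq_div_one_sub_exp {K : ℝ} (hK : K ≠ 0) (T d t : ℝ) :
    couplingDrift K T d t =
      2 * K * Real.exp (-K * t) * d / (1 - Real.exp (-2 * K * T)) := by
  have hnormalisation : ∫ s in 0..T, Real.exp (-2 * K * s) =
      (1 - Real.exp (-2 * K * T)) / (2 * K) := by
    rw [integral_exp_const_mul (mul_ne_zero (by norm_num) hK), mul_zero, Real.exp_zero, neg_mul 2 K,
      div_neg, ← neg_div, neg_sub]
  rw [couplingDrift, hnormalisation, div_div_eq_mul_div]
  ring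

theorem integral_exp_neg_mul {T : ℝ} (hT : 0 < T) (K d : ℝ) :
    ∫ t in 0..T, Real.exp (-(K * t)) * couplingDrift K T d t = d := by
  have hpos : 0 < ∫ s in 0..T, Real.exp (-2 * K * s) :=
    intervalIntegral.intervalIntegral_pos_of_pos
      (Continuous.intervalIntegrable (by fun_prop) 0 T) (fun s ↦ Real.exp_pos _) hT
  have hintegrand (t : ℝ) : Real.exp (-(K * t)) * couplingDrift K T d t =
      Real.exp (-2 * K * t) * (d / ∫ s in 0..T, Real.exp (-2 * K * s)) := by
    rw [couplingDrift, mul_div_assoc, ← mul_assoc, ← Real.exp_add]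
    ring_nf
  simp_rw [hintegrand]
  rw [intervalIntegral.integral_mul_const, mul_div_cancel₀ _ hpos.ne']

end couplingDrift

theorem stmt_1_general {T : ℝ} (hT : 0 < T) (K d : ℝ) {φ φ' : ℝ → ℝ}
    (hφ : ContinuousOn φ (Icc 0 T))
    (hφ' : ∀ t ∈ Ioo 0 T, HasDerivWithinAt φ (φ' t) (Ioi t) t)
    (hφT : 0 ≤ φ T) (hφ0 : φ 0 = d)
    (hle : ∀ t ∈ Ioo 0 T, φ' t ≤ K * φ t - couplingDrift K T d t) :
    φ T = 0 := by
  have hdecay : Real.exp (-(K * T)) * φ T ≤ Real.exp (-(K * 0)) * φ 0 -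
      ∫ t in 0..T, Real.exp (-(K * t)) * couplingDrift K T d t :=
    exp_neg_mul_le_sub_integral_of_deriv_right_le hT.le (by fun_prop) hφ
      (fun _ _ ↦ (hasDerivAt_const_mul K).hasDerivWithinAt) hφ'
      (couplingDrift.continuous K T d).integrableOn_Icc hle
  rw [couplingDrift.integral_exp_neg_mul hT, mul_zero, neg_zero, Real.exp_zero, one_mul, hφ0,
    sub_self] at hdecay
  exact le_antisymm (nonpos_of_mul_nonpos_right hdecay (Real.exp_pos _)) hφT

/-- Coupling-success step: with the drift `η t = 2 K e^{-K t} d / (1 - e^{-2 K T})`,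
a nonnegative differentiable `φ` with `φ 0 = d` and `φ' t ≤ K φ t - η t` on `[0, T]`
vanishes at time `T`. -/
theorem stmt_1 (T K d : ℝ) (hT : 0 < T) (hK : 0 < K) (hd : 0 ≤ d)
    (φ φ' : ℝ → ℝ)
    (hφ : ∀ t ∈ Icc (0:ℝ) T, HasDerivAt φ (φ' t) t)
    (hφpos : ∀ t ∈ Icc (0:ℝ) T, 0 ≤ φ t)
    (hφ0 : φ 0 = d)
    (hle : ∀ t ∈ Icc (0:ℝ) T,
      φ' t ≤ K * φ t - 2 * K * Real.exp (-K * t) * d / (1 - Real.exp (-2 * K * T))) :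
    φ T = 0 := by
  simp only [← couplingDrift.eq_div_one_sub_exp hK.ne'] at hle
  exact stmt_1_general hT K d (HasDerivAt.continuousOn hφ)
    (fun t ht ↦ (hφ t (Ioo_subset_Icc_self ht)).hasDerivWithinAt)
    (hφpos T (right_mem_Icc.2 hT.le)) hφ0 fun t ht ↦ hle t (Ioo_subset_Icc_self ht)
end

section
/- Let P be a Markov kernel from ℝ to ℝ, write Pf(x) = ∫ f(z) P(x, dz), and let C ≥ 0. Assume the Harnack inequality: for every p > 1, every bounded measurable f : ℝ → ℝ with f ≥ 0, and all x, y ∈ ℝ, (Pf(y))^p ≤ Pf^p(x) · exp(p·C·|x−y|²/(p−1)). Then the log-Harnack inequality holds: for every bounded measurable f : ℝ → ℝ with f ≥ 1 and all x, y ∈ ℝ, P(log f)(x) ≤ log Pf(y) + C·|x−y|². -/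
open MeasureTheory ProbabilityTheory

/-!
By Jensen's inequality the geometric mean `exp (∫ log f ∂μ)` is at most the power mean
`(∫ f ^ p⁻¹ ∂μ) ^ p`, which the Harnack inequality with power `p`, applied to `f ^ p⁻¹`, bounds by
`(∫ f ∂ν) * exp (p * c / (p - 1))`. Since the left-hand side does not depend on `p`, one can let
`p → ∞`, so the geometric mean is at most `(∫ f ∂ν) * exp c`; now take logarithms.
-/

section

open Filter Topology

theorem tendsto_mul_div_sub_atTop {𝕜 : Type*} [Field 𝕜] [LinearOrder 𝕜] [IsStrictOrderedRing 𝕜]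
    [TopologicalSpace 𝕜] [OrderTopology 𝕜] (a c : 𝕜) :
    Tendsto (fun x => x * c / (x - a)) atTop (𝓝 c) := by
  have hdecay : Tendsto (fun x => a * c / (x - a)) atTop (𝓝 0) :=
    (tendsto_atTop_add_const_right _ (-a) tendsto_id).const_div_atTop (a * c) |>.congr
      fun x => by rw [id, sub_eq_add_neg]
  have hlim := hdecay.const_add c
  rw [add_zero] at hlim
  refine hlim.congr' ?_
  filter_upwards [eventually_gt_atTop a] with x hx
  have hxa : x - a ≠ 0 := (sub_pos.2 hx).ne'
  field_simp
  ring

variable {Ω : Type*} [MeasurableSpace Ω] {μ ν : Measure Ω} {f : Ω → ℝ}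

theorem integrable_log_of_mem_Icc [IsFiniteMeasure μ] {a b : ℝ} (ha : 0 < a)
    (hf : AEMeasurable f μ) (hfab : ∀ᵐ z ∂μ, f z ∈ Set.Icc a b) :
    Integrable (fun z => Real.log (f z)) μ :=
  .of_mem_Icc (Real.log a) (Real.log b) hf.log <| hfab.mono fun _ hz =>
    ⟨Real.log_le_log ha hz.1, Real.log_le_log (ha.trans_le hz.1) hz.2⟩

theorem exp_integral_log_le_integral [IsProbabilityMeasure μ] (hpos : ∀ᵐ z ∂μ, 0 < f z)
    (hf : Integrable f μ) (hlog : Integrable (fun z => Real.log (f z)) μ) :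
    Real.exp (∫ z, Real.log (f z) ∂μ) ≤ ∫ z, f z ∂μ := by
  have hexp_log : (fun z => Real.exp (Real.log (f z))) =ᵐ[μ] f :=
    hpos.mono fun _ => Real.exp_log
  calc Real.exp (∫ z, Real.log (f z) ∂μ)
      ≤ ∫ z, Real.exp (Real.log (f z)) ∂μ :=
        convexOn_exp.map_integral_le Real.continuous_exp.continuousOn isClosed_univ
          (.of_forall fun _ => Set.mem_univ _) hlog (hf.congr hexp_log.symm)
    _ = ∫ z, f z ∂μ := integral_congr_ae hexp_log

theorem exp_integral_log_le_integral_rpow_rpow_inv [IsProbabilityMeasure μ] {q : ℝ} (hq : 0 < q)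
    (hpos : ∀ᵐ z ∂μ, 0 < f z) (hf : Integrable (fun z => f z ^ q) μ)
    (hlog : Integrable (fun z => Real.log (f z)) μ) :
    Real.exp (∫ z, Real.log (f z) ∂μ) ≤ (∫ z, f z ^ q ∂μ) ^ q⁻¹ := by
  have hlog_rpow : (fun z => Real.log (f z ^ q)) =ᵐ[μ] fun z => q * Real.log (f z) :=
    hpos.mono fun _ hz => Real.log_rpow hz q
  have jensen : Real.exp (q * ∫ z, Real.log (f z) ∂μ) ≤ ∫ z, f z ^ q ∂μ := by
    rw [← integral_const_mul, ← integral_congr_ae hlog_rpow]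
    exact exp_integral_log_le_integral (hpos.mono fun _ hz => Real.rpow_pos_of_pos hz q) hf
      ((hlog.const_mul q).congr hlog_rpow.symm)
  calc Real.exp (∫ z, Real.log (f z) ∂μ)
      = Real.exp (q * ∫ z, Real.log (f z) ∂μ) ^ q⁻¹ := by
        rw [← Real.exp_mul, mul_right_comm, mul_inv_cancel₀ hq.ne', one_mul]
    _ ≤ (∫ z, f z ^ q ∂μ) ^ q⁻¹ :=
        Real.rpow_le_rpow (Real.exp_nonneg _) jensen (inv_nonneg.2 hq.le)

theorem exp_integral_log_le_of_harnack [IsProbabilityMeasure μ] {p K : ℝ} (hp : 0 < p)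
    (harnack : ∀ g : Ω → ℝ, Measurable g → (∀ z, 0 ≤ g z) → (∃ M : ℝ, ∀ z, g z ≤ M) →
      (∫ z, g z ∂μ) ^ p ≤ (∫ z, g z ^ p ∂ν) * K)
    (hf : Measurable f) (hpos : ∀ z, 0 < f z) (hM : ∃ M : ℝ, ∀ z, f z ≤ M)
    (hlog : Integrable (fun z => Real.log (f z)) μ) :
    Real.exp (∫ z, Real.log (f z) ∂μ) ≤ (∫ z, f z ∂ν) * K := by
  obtain ⟨M, hM⟩ := hM
  have hg : Measurable fun z => f z ^ p⁻¹ := hf.pow_const _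
  have hg0 (z : Ω) : 0 ≤ f z ^ p⁻¹ := Real.rpow_nonneg (hpos z).le _
  have hgM (z : Ω) : f z ^ p⁻¹ ≤ M ^ p⁻¹ :=
    Real.rpow_le_rpow (hpos z).le (hM z) (inv_nonneg.2 hp.le)
  have hgi : Integrable (fun z => f z ^ p⁻¹) μ :=
    .of_mem_Icc 0 (M ^ p⁻¹) hg.aemeasurable (.of_forall fun z => ⟨hg0 z, hgM z⟩)
  calc Real.exp (∫ z, Real.log (f z) ∂μ)
      ≤ (∫ z, f z ^ p⁻¹ ∂μ) ^ p := by
        simpa only [inv_inv] using exp_integral_log_le_integral_rpow_rpow_inv (inv_pos.2 hp)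
          (.of_forall hpos) hgi hlog
    _ ≤ (∫ z, (f z ^ p⁻¹) ^ p ∂ν) * K := harnack _ hg hg0 ⟨_, hgM⟩
    _ = (∫ z, f z ∂ν) * K := by simp only [Real.rpow_inv_rpow (hpos _).le hp.ne']

theorem stmt_9_general [IsProbabilityMeasure μ] {c : ℝ}
    (harnack : ∃ᶠ p : ℝ in atTop, ∀ g : Ω → ℝ, Measurable g → (∀ z, 0 ≤ g z) →
      (∃ M : ℝ, ∀ z, g z ≤ M) →
      (∫ z, g z ∂μ) ^ p ≤ (∫ z, g z ^ p ∂ν) * Real.exp (p * c / (p - 1)))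
    (hf : Measurable f) (hpos : ∀ z, 0 < f z) (hM : ∃ M : ℝ, ∀ z, f z ≤ M)
    (hlog : Integrable (fun z => Real.log (f z)) μ) :
    ∫ z, Real.log (f z) ∂μ ≤ Real.log (∫ z, f z ∂ν) + c := by
  have hlim : Tendsto (fun p : ℝ => (∫ z, f z ∂ν) * Real.exp (p * c / (p - 1))) atTop
      (𝓝 ((∫ z, f z ∂ν) * Real.exp c)) :=
    (tendsto_mul_div_sub_atTop 1 c).rexp.const_mul _
  have hgeom : Real.exp (∫ z, Real.log (f z) ∂μ) ≤ (∫ z, f z ∂ν) * Real.exp c :=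
    ge_of_tendsto_of_frequently hlim <|
      (harnack.and_eventually (eventually_gt_atTop 0)).mono fun _ ⟨hp_harnack, hp⟩ =>
        exp_integral_log_le_of_harnack hp hp_harnack hf hpos hM hlog
  have hν : 0 < ∫ z, f z ∂ν :=
    pos_of_mul_pos_left ((Real.exp_pos _).trans_le hgeom) (Real.exp_nonneg c)
  rwa [← Real.le_log_iff_exp_le (by positivity), Real.log_mul hν.ne' (Real.exp_ne_zero c),
    Real.log_exp] at hgeom

end

/-- Harnack inequality with power `p` implies the log-Harnack inequality:
if `(Pf(y))^p ≤ Pf^p(x) exp(p C |x-y|²/(p-1))` for all `p > 1`, all bounded measurable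
`f ≥ 0` and all `x, y`, then `P(log f)(x) ≤ log Pf(y) + C |x-y|²` for all bounded
measurable `f ≥ 1`. -/
theorem stmt_9 (P : Kernel ℝ ℝ) [IsMarkovKernel P] (C : ℝ) (hC : 0 ≤ C)
    (harnack : ∀ p : ℝ, 1 < p → ∀ f : ℝ → ℝ, Measurable f → (∀ z, 0 ≤ f z) →
      (∃ M : ℝ, ∀ z, f z ≤ M) → ∀ x y : ℝ,
      (∫ z, f z ∂(P y)) ^ p
        ≤ (∫ z, f z ^ p ∂(P x)) * Real.exp (p * C * |x - y| ^ 2 / (p - 1))) :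
    ∀ f : ℝ → ℝ, Measurable f → (∀ z, 1 ≤ f z) → (∃ M : ℝ, ∀ z, f z ≤ M) →
      ∀ x y : ℝ,
      ∫ z, Real.log (f z) ∂(P x) ≤ Real.log (∫ z, f z ∂(P y)) + C * |x - y| ^ 2 := by
  rintro f hf h1 ⟨M, hM⟩ x y
  refine stmt_9_general ((Filter.eventually_gt_atTop 1).mono fun p hp g hg hg0 hgM => ?_).frequently
    hf (fun z => zero_lt_one.trans_le (h1 z)) ⟨M, hM⟩
    (integrable_log_of_mem_Icc zero_lt_one hf.aemeasurable (.of_forall fun z => ⟨h1 z, hM z⟩))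
  simpa only [mul_assoc, abs_sub_comm y x] using harnack p hp g hg hg0 hgM y x
end

section
/- Let 0 < H < 1/2, T > 0, K̄ ≥ 0, and let φ : [0,T] → ℝ be measurable with |φ(r)| ≤ 1 + K̄·T for all r ∈ [0,T]. Then (1/(Γ(1/2−H)·T))² · ∫₀ᵀ s^{2H−1} · (∫₀ˢ r^{1/2−H}·(s−r)^{−1/2−H}·φ(r) dr)² ds ≤ (B(3/2−H, 1/2−H)/Γ(1/2−H))² · (1 + K̄·T)² / (2·(1−H)·T^{2H}), where B(a,b) = Γ(a)Γ(b)/Γ(a+b) denotes the Beta function and Γ the Gamma function. -/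
open MeasureTheory Set

/-- The Beta function `B(a,b) = Γ(a) Γ(b) / Γ(a+b)`. -/
noncomputable def Beta (a b : ℝ) : ℝ := Real.Gamma a * Real.Gamma b / Real.Gamma (a + b)

/-!
Since `φ` is bounded by `M`, the inner integral is at most `M` times the scaled Beta integral
`∫₀ˢ r ^ a (s - r) ^ b dr = s ^ (a + b + 1) B(a + 1, b + 1)`. For `a = 1/2 - H` and `b = -1/2 - H`
this is a multiple of `s ^ (1 - 2H)`; squaring doubles the exponent and the weight `s ^ (2H - 1)`
halves it again, which leaves `s ^ (1 - 2H)` to integrate over `[0, T]`.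
-/

section BetaIntegral

variable {a b s : ℝ}

theorem ofReal_Beta (ha : 0 < a) (hb : 0 < b) : (Beta a b : ℂ) = Complex.betaIntegral a b := by
  rw [Complex.betaIntegral_eq_Gamma_mul_div (a : ℂ) (b : ℂ) (by simpa) (by simpa)]
  simp only [Beta, Complex.ofReal_mul, Complex.ofReal_div, ← Complex.Gamma_ofReal,
    Complex.ofReal_add]

theorem integral_rpow_mul_sub_rpow (ha : -1 < a) (hb : -1 < b) (hs : 0 < s) :
    ∫ r in (0 : ℝ)..s, r ^ a * (s - r) ^ b = s ^ (a + b + 1) * Beta (a + 1) (b + 1) := by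
  have hscaled := Complex.betaIntegral_scaled (a + 1 : ℝ) (b + 1 : ℝ) hs
  rw [← ofReal_Beta (by linarith) (by linarith)] at hscaled
  apply Complex.ofReal_injective
  rw [← intervalIntegral.integral_ofReal, Complex.ofReal_mul, Complex.ofReal_cpow hs.le,
    show a + b + 1 = a + 1 + (b + 1) - 1 by ring]
  push_cast at hscaled ⊢
  rw [← hscaled]
  refine intervalIntegral.integral_congr fun r hr ↦ ?_
  rw [uIcc_of_le hs.le] at hr
  simp only [Complex.ofReal_cpow hr.1, Complex.ofReal_cpow (sub_nonneg.2 hr.2),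
    Complex.ofReal_sub, add_sub_cancel_right]

theorem intervalIntegrable_rpow_mul_sub_rpow (ha : -1 < a) (hb : -1 < b) (hs : 0 < s) :
    IntervalIntegrable (fun r : ℝ ↦ r ^ a * (s - r) ^ b) volume 0 s := by
  apply intervalIntegral.intervalIntegrable_of_integral_ne_zero
  rw [integral_rpow_mul_sub_rpow ha hb hs]
  exact (mul_pos (Real.rpow_pos_of_pos hs _)
    (ProbabilityTheory.beta_pos (by linarith) (by linarith))).ne'

end BetaIntegral

section BetaKernel

variable {E : Type*} [NormedAddCommGroup E] [NormedSpace ℝ E] {φ : ℝ → E} {a b s T M : ℝ}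

theorem norm_integral_rpow_mul_sub_rpow_smul_le (ha : -1 < a) (hb : -1 < b) (hs : 0 < s)
    (hφ : ∀ r ∈ Ioc 0 s, ‖φ r‖ ≤ M) :
    ‖∫ r in (0 : ℝ)..s, (r ^ a * (s - r) ^ b) • φ r‖ ≤
      Beta (a + 1) (b + 1) * M * s ^ (a + b + 1) := by
  have hkernel : ∀ r ∈ Ioc 0 s, ‖(r ^ a * (s - r) ^ b) • φ r‖ ≤ r ^ a * (s - r) ^ b * M := by
    intro r hr
    have hpos : 0 ≤ r ^ a * (s - r) ^ b :=
      mul_nonneg (Real.rpow_nonneg hr.1.le _) (Real.rpow_nonneg (sub_nonneg.2 hr.2) _)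
    rw [norm_smul, Real.norm_of_nonneg hpos]
    exact mul_le_mul_of_nonneg_left (hφ r hr) hpos
  calc ‖∫ r in (0 : ℝ)..s, (r ^ a * (s - r) ^ b) • φ r‖
      ≤ ∫ r in (0 : ℝ)..s, r ^ a * (s - r) ^ b * M :=
        intervalIntegral.norm_integral_le_of_norm_le hs.le (ae_of_all _ hkernel)
          ((intervalIntegrable_rpow_mul_sub_rpow ha hb hs).mul_const M)
    _ = Beta (a + 1) (b + 1) * M * s ^ (a + b + 1) := by
        rw [intervalIntegral.integral_mul_const, integral_rpow_mul_sub_rpow ha hb hs]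
        ring

theorem aestronglyMeasurable_intervalIntegral_right {μ ν : Measure ℝ} [SFinite μ] {l u : ℝ}
    {f : ℝ → ℝ → E} (hf : AEStronglyMeasurable (Function.uncurry f)
      ((ν.restrict (Ioc l u)).prod (μ.restrict (Ioc l u)))) :
    AEStronglyMeasurable (fun s ↦ ∫ r in l..s, f s r ∂μ) (ν.restrict (Ioc l u)) := by
  have htriangle : MeasurableSet {p : ℝ × ℝ | p.2 ≤ p.1} :=
    measurableSet_le measurable_snd measurable_fst
  refine (hf.indicator htriangle).integral_prod_right'.congr
    (ae_restrict_of_forall_mem measurableSet_Ioc fun s hs ↦ ?_)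
  have hIoc : Ioc l s = Ioc l u ∩ Iic s := by rw [Ioc_inter_Iic, inf_eq_right.2 hs.2]
  beta_reduce
  rw [intervalIntegral.integral_of_le hs.1.le, hIoc, ← setIntegral_indicator measurableSet_Iic]
  rfl

theorem aestronglyMeasurable_integral_rpow_mul_sub_rpow_smul
    (hφ : AEStronglyMeasurable φ (volume.restrict (Ioc 0 T))) :
    AEStronglyMeasurable (fun s : ℝ ↦ ∫ r in (0 : ℝ)..s, (r ^ a * (s - r) ^ b) • φ r)
      (volume.restrict (Ioc 0 T)) := by
  have hkernel : Measurable fun p : ℝ × ℝ ↦ p.2 ^ a * (p.1 - p.2) ^ b := by fun_prop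
  exact aestronglyMeasurable_intervalIntegral_right (hkernel.aestronglyMeasurable.smul hφ.comp_snd)

end BetaKernel

section PowerGrowth

variable {F : Type*} [SeminormedAddCommGroup F] {g : ℝ → F} {c γ C T : ℝ} {p : ℕ}

theorem norm_rpow_mul_norm_pow_le {x : F} {s : ℝ} (hs : 0 < s) (hx : ‖x‖ ≤ C * s ^ γ) :
    ‖s ^ c * ‖x‖ ^ p‖ ≤ C ^ p * s ^ (c + p * γ) := by
  calc ‖s ^ c * ‖x‖ ^ p‖ = s ^ c * ‖x‖ ^ p := Real.norm_of_nonneg (by positivity)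
    _ ≤ s ^ c * (C * s ^ γ) ^ p := by gcongr
    _ = C ^ p * s ^ (c + p * γ) := by
        rw [mul_pow, ← Real.rpow_mul_natCast hs.le, mul_left_comm, ← Real.rpow_add hs,
          mul_comm γ]

theorem intervalIntegrable_rpow_mul_norm_pow (hT : 0 ≤ T) (hexp : -1 < c + p * γ)
    (hmeas : AEStronglyMeasurable g (volume.restrict (Ioc 0 T)))
    (hg : ∀ s ∈ Ioc 0 T, ‖g s‖ ≤ C * s ^ γ) :
    IntervalIntegrable (fun s : ℝ ↦ s ^ c * ‖g s‖ ^ p) volume 0 T := by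
  have hdom := (intervalIntegral.intervalIntegrable_rpow' (a := 0) (b := T) hexp).const_mul (C ^ p)
  rw [intervalIntegrable_iff_integrableOn_Ioc_of_le hT] at hdom ⊢
  have hweight : Measurable fun s : ℝ ↦ s ^ c := by fun_prop
  exact hdom.mono' (hweight.aestronglyMeasurable.mul (hmeas.norm.pow p))
    (ae_restrict_of_forall_mem measurableSet_Ioc fun s hs ↦
      norm_rpow_mul_norm_pow_le hs.1 (hg s hs))

theorem integral_rpow_mul_norm_pow_le (hT : 0 ≤ T) (hexp : -1 < c + p * γ)
    (hg : ∀ s ∈ Ioc 0 T, ‖g s‖ ≤ C * s ^ γ) :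
    ∫ s in (0 : ℝ)..T, s ^ c * ‖g s‖ ^ p ≤
      C ^ p * (T ^ (c + p * γ + 1) / (c + p * γ + 1)) := by
  calc ∫ s in (0 : ℝ)..T, s ^ c * ‖g s‖ ^ p
      ≤ ∫ s in (0 : ℝ)..T, C ^ p * s ^ (c + p * γ) :=
        (Real.le_norm_self _).trans <| intervalIntegral.norm_integral_le_of_norm_le hT
          (ae_of_all _ fun s hs ↦ norm_rpow_mul_norm_pow_le hs.1 (hg s hs))
          ((intervalIntegral.intervalIntegrable_rpow' hexp).const_mul _)
    _ = C ^ p * (T ^ (c + p * γ + 1) / (c + p * γ + 1)) := by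
        rw [intervalIntegral.integral_const_mul, integral_rpow (Or.inl hexp),
          Real.zero_rpow (by linarith), sub_zero]

end PowerGrowth

theorem stmt_11_general {E : Type*} [NormedAddCommGroup E] [NormedSpace ℝ E] [CompleteSpace E]
    {H T M : ℝ} (hH : H < 1 / 2) (hT : 0 < T) {φ : ℝ → E}
    (hmeas : AEStronglyMeasurable φ (volume.restrict (Ioc 0 T)))
    (hbound : ∀ r ∈ Ioc 0 T, ‖φ r‖ ≤ M) :
    IntervalIntegrable (fun s : ℝ ↦ s ^ (2 * H - 1) *
        ‖∫ r in (0 : ℝ)..s, (r ^ (1 / 2 - H) * (s - r) ^ (-1 / 2 - H)) • φ r‖ ^ 2) volume 0 T ∧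
      (1 / (Real.Gamma (1 / 2 - H) * T)) ^ 2 *
          ∫ s in (0 : ℝ)..T, s ^ (2 * H - 1) *
            ‖∫ r in (0 : ℝ)..s, (r ^ (1 / 2 - H) * (s - r) ^ (-1 / 2 - H)) • φ r‖ ^ 2
        ≤ (Beta (3 / 2 - H) (1 / 2 - H) / Real.Gamma (1 / 2 - H)) ^ 2 *
            M ^ 2 / (2 * (1 - H) * T ^ (2 * H)) := by
  have hinner : ∀ s ∈ Ioc 0 T,
      ‖∫ r in (0 : ℝ)..s, (r ^ (1 / 2 - H) * (s - r) ^ (-1 / 2 - H)) • φ r‖ ≤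
        Beta (3 / 2 - H) (1 / 2 - H) * M * s ^ (1 - 2 * H) := by
    intro s hs
    convert norm_integral_rpow_mul_sub_rpow_smul_le (a := 1 / 2 - H) (b := -1 / 2 - H)
      (by linarith) (by linarith) hs.1
      (fun r hr ↦ hbound r ⟨hr.1, hr.2.trans hs.2⟩) using 4 <;> ring
  have hexponent : 2 * H - 1 + (2 : ℕ) * (1 - 2 * H) = 1 - 2 * H := by push_cast; ring
  have hexp : -1 < 2 * H - 1 + (2 : ℕ) * (1 - 2 * H) := by linarith
  refine ⟨intervalIntegrable_rpow_mul_norm_pow hT.le hexp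
    (aestronglyMeasurable_integral_rpow_mul_sub_rpow_smul hmeas) hinner, ?_⟩
  have houter := integral_rpow_mul_norm_pow_le hT.le hexp hinner
  have hT_pow : T ^ (2 * (1 - H)) = T ^ 2 / T ^ (2 * H) := by
    rw [← Real.rpow_two, ← Real.rpow_sub hT, mul_one_sub]
  rw [hexponent, show 1 - 2 * H + 1 = 2 * (1 - H) by ring, hT_pow] at houter
  refine (mul_le_mul_of_nonneg_left houter (sq_nonneg _)).trans_eq ?_
  field_simp

/-- Quadratic-variation estimate of Corollary 4.1: if `|φ r| ≤ 1 + K̄ T` on `[0,T]`, then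
`(1/(Γ(1/2-H) T))² ∫₀ᵀ s^{2H-1} (∫₀ˢ r^{1/2-H} (s-r)^{-1/2-H} φ r dr)² ds
  ≤ (B(3/2-H,1/2-H)/Γ(1/2-H))² (1 + K̄ T)² / (2 (1-H) T^{2H})`. -/
theorem stmt_11 (H T Kb : ℝ) (hH0 : 0 < H) (hH : H < 1/2) (hT : 0 < T) (hKb : 0 ≤ Kb)
    (φ : ℝ → ℝ) (hmeas : Measurable φ)
    (hbound : ∀ r ∈ Icc (0:ℝ) T, |φ r| ≤ 1 + Kb * T) :
    (1 / (Real.Gamma (1/2 - H) * T)) ^ 2 *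
        ∫ s in (0:ℝ)..T,
          s ^ (2*H - 1) * (∫ r in (0:ℝ)..s, r ^ (1/2 - H) * (s - r) ^ (-1/2 - H) * φ r) ^ 2
      ≤ (Beta (3/2 - H) (1/2 - H) / Real.Gamma (1/2 - H)) ^ 2 *
          (1 + Kb * T) ^ 2 / (2 * (1 - H) * T ^ (2*H)) := by
  simpa only [smul_eq_mul, Real.norm_eq_abs, sq_abs] using
    (stmt_11_general hH hT hmeas.aestronglyMeasurable
      fun r hr ↦ hbound r (Ioc_subset_Icc_self hr)).2
end

section
/- Let P be a Markov kernel from ℝ to ℝ, write Pg(x) = ∫ g(z) P(x, dz), let C ≥ 0 and p > 1. Let f : ℝ → ℝ be a bounded measurable function with inf f > 0, and let x, y ∈ ℝ. Set β(s) = 1 + s(p−1) and γ(s) = x + s(y−x) for s ∈ [0,1]. Assume: (i) for every s ∈ [0,1], the function z ↦ P(f^{β(s)})(z) is differentiable, and for every δ > 0 and every z ∈ ℝ, |(d/dε)|_{ε=0} P(f^{β(s)})(z + ε(y−x))| ≤ δ·[P(f^{β(s)}·log f^{β(s)})(z) − P(f^{β(s)})(z)·log P(f^{β(s)})(z)] +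 (C·(y−x)²/δ)·P(f^{β(s)})(z); (ii) the function (s,z) ↦ P(f^{β(s)})(z) is continuously differentiable on [0,1] × ℝ with ∂_s P(f^{β(s)})(z) = (p−1)·P(f^{β(s)}·log f)(z). Then (Pf(y))^p ≤ P(f^p)(x) · exp(p·C·(y−x)²/(p−1)). -/
open MeasureTheory ProbabilityTheory Set

/-!
Write `F (s, z) = ∫ f ^ β s ∂κ z` with `β s = 1 + s (p - 1)`, and let `u s = F (s, γ s)` along the
segment `γ s = y + s (x - y)`, so that `u 0 = ∫ f ∂κ y` and `u 1 = ∫ f ^ p ∂κ x`. The `s`-derivative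
of `F` produces `(p - 1) ∫ f ^ β log f`, which cancels the term `δ ∫ f ^ β log f ^ β` of the
entropy-gradient estimate exactly when `δ = (p - 1) / β s`. What remains is
`(log u / β)' ≥ - K / (p - 1)`, where `K` stands for `C (y - x)²`, and integrating over `[0, 1]`
gives the Harnack inequality.
-/

/-- The hypothesis on `u'` is `(log u / β)' ≥ -c`, multiplied by `β² u`. -/
lemma log_div_sub_mul_le_log_div {β β' u u' : ℝ → ℝ} {a b c : ℝ} (hab : a ≤ b)
    (hβ_cont : ContinuousOn β (Icc a b)) (hβ_pos : ∀ s ∈ Icc a b, 0 < β s)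
    (hβ_deriv : ∀ s ∈ Ioo a b, HasDerivAt β (β' s) s)
    (hu_cont : ContinuousOn u (Icc a b)) (hu_pos : ∀ s ∈ Icc a b, 0 < u s)
    (hu_deriv : ∀ s ∈ Ioo a b, HasDerivAt u (u' s) s)
    (hu' : ∀ s ∈ Ioo a b,
      β' s * (u s * Real.log (u s)) - c * β s ^ 2 * u s ≤ β s * u' s) :
    Real.log (u a) / β a - c * (b - a) ≤ Real.log (u b) / β b := by
  have hcont : ContinuousOn (fun s => Real.log (u s) / β s) (Icc a b) :=
    (hu_cont.log fun s hs => (hu_pos s hs).ne').div hβ_cont fun s hs => (hβ_pos s hs).ne'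
  have hderiv : ∀ s ∈ Ioo a b, HasDerivAt (fun s => Real.log (u s) / β s)
      ((u' s / u s * β s - Real.log (u s) * β' s) / β s ^ 2) s := fun s hs =>
    ((hu_deriv s hs).log (hu_pos s (Ioo_subset_Icc_self hs)).ne').fun_div (hβ_deriv s hs)
      (hβ_pos s (Ioo_subset_Icc_self hs)).ne'
  have hderiv_ge : ∀ s ∈ Ioo a b, -c ≤ deriv (fun s => Real.log (u s) / β s) s := by
    intro s hs
    have hβs := hβ_pos s (Ioo_subset_Icc_self hs)
    have hus := hu_pos s (Ioo_subset_Icc_self hs)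
    rw [(hderiv s hs).deriv, le_div_iff₀ (by positivity), ← mul_le_mul_iff_of_pos_right hus]
    have hcancel : (u' s / u s * β s - Real.log (u s) * β' s) * u s
        = β s * u' s - β' s * (u s * Real.log (u s)) := by
      field_simp
    linarith [hu' s hs]
  have hincrement := (convex_Icc a b).mul_sub_le_image_sub_of_le_deriv hcont
    (by
      rw [interior_Icc]
      exact fun s hs => (hderiv s hs).differentiableAt.differentiableWithinAt)
    (by rwa [interior_Icc])
    a (left_mem_Icc.2 hab) b (right_mem_Icc.2 hab) hab
  linarith

lemma hasDerivAt_along_curve {E G : Type*} [NormedAddCommGroup E] [NormedSpace ℝ E]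
    [NormedAddCommGroup G] [NormedSpace ℝ G] {F : ℝ × E → G} {γ : ℝ → E} {v : E} {s : ℝ}
    (hF : DifferentiableAt ℝ F (s, γ s)) (hγ : HasDerivAt γ v s) :
    HasDerivAt (fun t => F (t, γ t))
      (deriv (fun t => F (t, γ s)) s + lineDeriv ℝ (fun z => F (s, z)) (γ s) v) s := by
  have htime : deriv (fun t => F (t, γ s)) s = fderiv ℝ F (s, γ s) (1, 0) :=
    (hF.hasFDerivAt.comp_hasDerivAt s ((hasDerivAt_id s).prodMk (hasDerivAt_const s (γ s)))).deriv
  have hspace : lineDeriv ℝ (fun z => F (s, z)) (γ s) v = fderiv ℝ F (s, γ s) (0, v) :=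
    ((hF.hasFDerivAt.comp (γ s) (hasFDerivAt_prodMk_right s (γ s))).hasLineDerivAt v).lineDeriv
  rw [htime, hspace, ← map_add, Prod.mk_add_mk, add_zero, zero_add]
  exact hF.hasFDerivAt.comp_hasDerivAt s ((hasDerivAt_id s).prodMk hγ)

lemma rpow_le_mul_exp_of_log_sub_le {a b c p : ℝ} (ha : 0 < a) (hb : 0 < b) (hp : 0 < p)
    (h : Real.log a - c ≤ Real.log b / p) : a ^ p ≤ b * Real.exp (p * c) := by
  rw [le_div_iff₀ hp] at h
  calc a ^ p = Real.exp (Real.log a * p) := Real.rpow_def_of_pos ha p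
    _ ≤ Real.exp (Real.log b + p * c) := Real.exp_le_exp.2 (by linarith)
    _ = b * Real.exp (p * c) := by rw [Real.exp_add, Real.exp_log hb]

section Integrals

variable {Ω : Type*} [MeasurableSpace Ω] {μ : Measure Ω} {f : Ω → ℝ}

/-- The entropy `μ(g log g) - μ(g) log μ(g)` of a nonnegative function `g`; `μ` need not be a
probability measure. -/
noncomputable def functionEntropy (μ : Measure Ω) (g : Ω → ℝ) : ℝ :=
  (∫ w, g w * Real.log (g w) ∂μ) - (∫ w, g w ∂μ) * Real.log (∫ w, g w ∂μ)

lemma functionEntropy_rpow (hf : ∀ᵐ w ∂μ, 0 < f w) (b : ℝ) :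
    functionEntropy μ (fun w => f w ^ b)
      = b * (∫ w, f w ^ b * Real.log (f w) ∂μ)
        - (∫ w, f w ^ b ∂μ) * Real.log (∫ w, f w ^ b ∂μ) := by
  have hlog : ∫ w, f w ^ b * Real.log (f w ^ b) ∂μ
      = b * ∫ w, f w ^ b * Real.log (f w) ∂μ := by
    rw [← integral_const_mul]
    refine integral_congr_ae ?_
    filter_upwards [hf] with w hw
    rw [Real.log_rpow hw]
    ring
  rw [functionEntropy, hlog]

lemma integral_pos_of_ae_pos [NeZero μ] (hf : ∀ᵐ w ∂μ, 0 < f w) (hint : Integrable f μ) :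
    0 < ∫ w, f w ∂μ := by
  have hnonneg : 0 ≤ᵐ[μ] f := hf.mono fun _ => le_of_lt
  refine (integral_nonneg_of_ae hnonneg).lt_of_ne' fun hzero => ?_
  have hae_zero := (integral_eq_zero_iff_of_nonneg_ae hnonneg hint).1 hzero
  obtain ⟨w, hpos, heq⟩ := (hf.and hae_zero).exists
  exact hpos.ne' heq

lemma integrable_rpow_of_bounded [IsFiniteMeasure μ] {M b : ℝ} (hf : AEMeasurable f μ)
    (hf_nonneg : ∀ᵐ w ∂μ, 0 ≤ f w) (hf_le : ∀ᵐ w ∂μ, f w ≤ M) (hb : 0 ≤ b) :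
    Integrable (fun w => f w ^ b) μ := by
  refine Integrable.of_mem_Icc 0 (M ^ b) (hf.pow_const b) ?_
  filter_upwards [hf_nonneg, hf_le] with w h0 hM
  exact ⟨Real.rpow_nonneg h0 b, Real.rpow_le_rpow h0 hM hb⟩

end Integrals

/-- The entropy-gradient estimate at `δ = (p - 1) / b`, with `m = ∫ f ^ b`, `A = ∫ f ^ b log f` and
`D` the spatial derivative of `m`. -/
lemma mul_log_sub_le_of_entropy_gradient_bound {A D K b m p : ℝ} (hb : 0 < b) (hp : 1 < p)
    (h : ∀ δ : ℝ, 0 < δ → D ≤ δ * (b * A - m * Real.log m) + K / δ * m) :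
    (p - 1) * (m * Real.log m) - K / (p - 1) * b ^ 2 * m ≤ b * ((p - 1) * A - D) := by
  have hp' : 0 < p - 1 := sub_pos.2 hp
  have hmul := mul_le_mul_of_nonneg_left (h ((p - 1) / b) (div_pos hp' hb)) hb.le
  have hexpand : b * ((p - 1) / b * (b * A - m * Real.log m) + K / ((p - 1) / b) * m)
      = (p - 1) * (b * A - m * Real.log m) + K / (p - 1) * b ^ 2 * m := by
    field_simp
  linarith

theorem stmt_13_general {E Ω : Type*} [NormedAddCommGroup E] [NormedSpace ℝ E]
    [MeasurableSpace Ω] (κ : E → Measure Ω) [∀ z, NeZero (κ z)] {K p : ℝ} (hp : 1 < p)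
    {f : Ω → ℝ} (hf : ∀ z, ∀ᵐ w ∂κ z, 0 < f w) {x y : E}
    (hint : ∀ s ∈ Icc (0 : ℝ) 1, ∀ z, Integrable (fun w => f w ^ (1 + s * (p - 1))) (κ z))
    (hgrad : ∀ s ∈ Icc (0 : ℝ) 1, ∀ δ : ℝ, 0 < δ → ∀ z,
      lineDeriv ℝ (fun z => ∫ w, f w ^ (1 + s * (p - 1)) ∂κ z) z (y - x)
        ≤ δ * functionEntropy (κ z) (fun w => f w ^ (1 + s * (p - 1)))
          + K / δ * ∫ w, f w ^ (1 + s * (p - 1)) ∂κ z)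
    (hdiff : DifferentiableOn ℝ (fun q : ℝ × E => ∫ w, f w ^ (1 + q.1 * (p - 1)) ∂κ q.2)
      (Icc (0 : ℝ) 1 ×ˢ univ))
    (hderivs : ∀ z, ∀ s ∈ Icc (0 : ℝ) 1,
      HasDerivAt (fun s : ℝ => ∫ w, f w ^ (1 + s * (p - 1)) ∂κ z)
        ((p - 1) * ∫ w, f w ^ (1 + s * (p - 1)) * Real.log (f w) ∂κ z) s) :
    (∫ w, f w ∂κ y) ^ p ≤ (∫ w, f w ^ p ∂κ x) * Real.exp (p * K / (p - 1)) := by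
  set F : ℝ × E → ℝ := fun q => ∫ w, f w ^ (1 + q.1 * (p - 1)) ∂κ q.2 with hF
  let γ : ℝ → E := AffineMap.lineMap y x
  have hβ_pos : ∀ s ∈ Icc (0 : ℝ) 1, 0 < 1 + s * (p - 1) := fun s hs =>
    add_pos_of_pos_of_nonneg one_pos (mul_nonneg hs.1 (sub_pos.2 hp).le)
  have hF_pos : ∀ s ∈ Icc (0 : ℝ) 1, ∀ z, 0 < F (s, z) := fun s hs z =>
    integral_pos_of_ae_pos ((hf z).mono fun w hw => Real.rpow_pos_of_pos hw _) (hint s hs z)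
  have hF_deriv : ∀ s ∈ Ioo (0 : ℝ) 1, HasDerivAt (fun t => F (t, γ t))
      ((p - 1) * (∫ w, f w ^ (1 + s * (p - 1)) * Real.log (f w) ∂κ (γ s))
        - lineDeriv ℝ (fun z => F (s, z)) (γ s) (y - x)) s := by
    intro s hs
    have hF_diff : DifferentiableAt ℝ F (s, γ s) :=
      hdiff.differentiableAt (prod_mem_nhds (Icc_mem_nhds hs.1 hs.2) Filter.univ_mem)
    have h := hasDerivAt_along_curve hF_diff AffineMap.hasDerivAt_lineMap
    rwa [(hderivs (γ s) s (Ioo_subset_Icc_self hs)).deriv, ← neg_sub y x, lineDeriv_neg,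
      ← sub_eq_add_neg] at h
  have hlog := log_div_sub_mul_le_log_div (β := fun s => 1 + s * (p - 1)) (β' := fun _ => p - 1)
    (u := fun s => F (s, γ s)) (c := K / (p - 1)) zero_le_one (by fun_prop) hβ_pos
    (fun s _ => (hasDerivAt_mul_const (p - 1)).const_add 1)
    (hdiff.continuousOn.comp (by fun_prop) fun s hs => ⟨hs, mem_univ (γ s)⟩)
    (fun s hs => hF_pos s hs (γ s)) hF_deriv fun s hs => by
      have hs' := Ioo_subset_Icc_self hs
      refine mul_log_sub_le_of_entropy_gradient_bound (hβ_pos s hs') hp fun δ hδ => ?_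
      simpa only [functionEntropy_rpow (hf (γ s))] using hgrad s hs' δ hδ (γ s)
  have hy := hF_pos 0 (left_mem_Icc.2 zero_le_one) y
  have hx := hF_pos 1 (right_mem_Icc.2 zero_le_one) x
  simp only [hF, γ, AffineMap.lineMap_apply_zero, AffineMap.lineMap_apply_one, zero_mul, add_zero,
    Real.rpow_one, one_mul, add_sub_cancel, div_one, sub_zero, mul_one] at hlog hx hy
  rw [mul_div_assoc p]
  exact rpow_le_mul_exp_of_log_sub_le hy hx (zero_lt_one.trans hp) hlog

/-- Abstract interpolation argument (proof of Corollary 4.1): a gradient-entropy estimate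
along the interpolation `β s = 1 + s (p-1)`, `γ s = x + s (y-x)`, together with smoothness
in the interpolation parameter, yields the Harnack inequality with power `p`. -/
theorem stmt_13 (P : Kernel ℝ ℝ) [IsMarkovKernel P] (C p : ℝ) (hC : 0 ≤ C) (hp : 1 < p)
    (f : ℝ → ℝ) (hfmeas : Measurable f) (hfbdd : ∃ M : ℝ, ∀ z, f z ≤ M)
    (hfinf : ∃ ε : ℝ, 0 < ε ∧ ∀ z, ε ≤ f z)
    (x y : ℝ)
    (hdiff : ∀ s ∈ Icc (0:ℝ) 1,
      Differentiable ℝ (fun z => ∫ z', f z' ^ (1 + s * (p - 1)) ∂(P z)))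
    (hgrad : ∀ s ∈ Icc (0:ℝ) 1, ∀ δ : ℝ, 0 < δ → ∀ z : ℝ,
      |deriv (fun ε : ℝ => ∫ z', f z' ^ (1 + s * (p - 1)) ∂(P (z + ε * (y - x)))) 0|
        ≤ δ * ((∫ z', f z' ^ (1 + s * (p - 1)) *
                  Real.log (f z' ^ (1 + s * (p - 1))) ∂(P z))
              - (∫ z', f z' ^ (1 + s * (p - 1)) ∂(P z)) *
                  Real.log (∫ z', f z' ^ (1 + s * (p - 1)) ∂(P z)))
          + (C * (y - x) ^ 2 / δ) * ∫ z', f z' ^ (1 + s * (p - 1)) ∂(P z))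
    (hsmooth : ContDiffOn ℝ 1
      (fun q : ℝ × ℝ => ∫ z', f z' ^ (1 + q.1 * (p - 1)) ∂(P q.2))
      (Icc (0:ℝ) 1 ×ˢ (univ : Set ℝ)))
    (hderivs : ∀ z : ℝ, ∀ s ∈ Icc (0:ℝ) 1,
      HasDerivAt (fun s : ℝ => ∫ z', f z' ^ (1 + s * (p - 1)) ∂(P z))
        ((p - 1) * ∫ z', f z' ^ (1 + s * (p - 1)) * Real.log (f z') ∂(P z)) s) :
    (∫ z, f z ∂(P y)) ^ p
      ≤ (∫ z, f z ^ p ∂(P x)) * Real.exp (p * C * (y - x) ^ 2 / (p - 1)) := by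
  obtain ⟨M, hM⟩ := hfbdd
  obtain ⟨ε, hε, hεf⟩ := hfinf
  have hf_pos : ∀ z, 0 < f z := fun z => hε.trans_le (hεf z)
  have hint : ∀ s ∈ Icc (0 : ℝ) 1, ∀ z, Integrable (fun z' => f z' ^ (1 + s * (p - 1))) (P z) :=
    fun s hs z => integrable_rpow_of_bounded hfmeas.aemeasurable
      (ae_of_all _ fun z' => (hf_pos z').le) (ae_of_all _ hM)
      (add_nonneg zero_le_one (mul_nonneg hs.1 (sub_pos.2 hp).le))
  rw [mul_assoc p]
  exact stmt_13_general P hp (fun z => ae_of_all _ hf_pos) hint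
    (fun s hs δ hδ z => (le_abs_self _).trans (hgrad s hs δ hδ z))
    (hsmooth.differentiableOn one_ne_zero) hderivs
end
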